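/- arXiv:2506.06223 — 8 statements merged into one kernel-verified Lean document; each statement's English description precedes it below -/
import Mathlib

section
/- Let m ≥ 1 be a natural number and let s, t, k, l be real numbers with 0 < s < 1, 0 ≤ t, s + t < 1, 0 ≤ k ≤ 1 and 0 ≤ l. Let p_1, …, p_{m+1} be real numbers such that p_i ≥ t·p_1 + s·p_{i+1} for every i = 1, …, m, and p_{m+1} ≥ k·p_1 + l. Then p_1 ≥ (1−s)·s^m·l / (1 − (s+t) + k·s^{m+1} + t·s^m − k·s^m). -/
/-!
Write `r = t * (1 + s + ⋯ + s ^ (m - 1)) + k * s ^ m`; for the chain that attains all the bounds,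
this is the probability of returning to the initial state, and `s ^ m * l` is the probability of
reaching the bottom sink without such a return. Unrolling the recurrence gives
`p 1 ≥ r * p 1 + s ^ m * l`. Since `t < 1 - s` and `k ≤ 1`, the geometric sum telescopes to
`r < (1 - s ^ m) + s ^ m = 1`, so one can solve for `p 1`. The stated fraction is
`s ^ m * l / (1 - r)` with numerator and denominator multiplied by `1 - s`.
-/

open Finset

theorem geom_sum_mul_add_pow_mul_le_of_affine_recurrence {R : Type*} [Semiring R] [PartialOrder R]
    [IsOrderedRing R] {s c : R} (hs : 0 ≤ s) {u : ℕ → R} {n : ℕ}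
    (hu : ∀ i < n, c + s * u (i + 1) ≤ u i) :
    (∑ i ∈ range n, s ^ i) * c + s ^ n * u n ≤ u 0 := by
  induction n with
  | zero => simp
  | succ n ih =>
    calc (∑ i ∈ range (n + 1), s ^ i) * c + s ^ (n + 1) * u (n + 1)
        = (∑ i ∈ range n, s ^ i) * c + s ^ n * (c + s * u (n + 1)) := by
          rw [sum_range_succ, pow_succ]
          noncomm_ring
      _ ≤ (∑ i ∈ range n, s ^ i) * c + s ^ n * u n := by
          gcongr
          exact hu n n.lt_succ_self
      _ ≤ u 0 := ih fun i hi => hu i (hi.trans n.lt_succ_self)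

theorem mul_geom_sum_add_mul_pow_lt_one {R : Type*} [Ring R] [PartialOrder R]
    [IsStrictOrderedRing R] {s t k : R} {n : ℕ} (hn : n ≠ 0) (hs : 0 ≤ s) (hst : s + t < 1)
    (hk : k ≤ 1) : t * (∑ i ∈ range n, s ^ i) + k * s ^ n < 1 := by
  have hsum : 0 < ∑ i ∈ range n, s ^ i := geom_sum_pos hs hn
  have ht : t < 1 - s := lt_sub_iff_add_lt'.mpr hst
  calc t * (∑ i ∈ range n, s ^ i) + k * s ^ n
      < (1 - s) * (∑ i ∈ range n, s ^ i) + 1 * s ^ n :=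
        add_lt_add_of_lt_of_le (mul_lt_mul_of_pos_right ht hsum)
          (mul_le_mul_of_nonneg_right hk (pow_nonneg hs n))
    _ = 1 := by rw [mul_neg_geom_sum, one_mul, sub_add_cancel]

section Field

variable {K : Type*} [Field K] [LinearOrder K] [IsStrictOrderedRing K]

theorem pow_mul_div_one_sub_le_of_recurrence {s t k l : K} {n : ℕ} (hn : n ≠ 0) (hs : 0 ≤ s)
    (hst : s + t < 1) (hk : k ≤ 1) {u : ℕ → K} (hu : ∀ i < n, t * u 0 + s * u (i + 1) ≤ u i)
    (hun : k * u 0 + l ≤ u n) :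
    s ^ n * l / (1 - (t * (∑ i ∈ range n, s ^ i) + k * s ^ n)) ≤ u 0 := by
  have hlt := mul_geom_sum_add_mul_pow_lt_one hn hs hst hk
  rw [div_le_iff₀ (sub_pos.mpr hlt)]
  have hunrolled : (∑ i ∈ range n, s ^ i) * (t * u 0) + s ^ n * (k * u 0 + l) ≤ u 0 :=
    calc (∑ i ∈ range n, s ^ i) * (t * u 0) + s ^ n * (k * u 0 + l)
        ≤ (∑ i ∈ range n, s ^ i) * (t * u 0) + s ^ n * u n := by gcongr
      _ ≤ u 0 := geom_sum_mul_add_pow_mul_le_of_affine_recurrence hs hu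
  linarith

theorem stmt_0_general (m : ℕ) (hm : 1 ≤ m) (s t k l : K) (hs : 0 ≤ s) (hs1 : s ≠ 1)
    (hst : s + t < 1) (hk1 : k ≤ 1) (p : ℕ → K)
    (hrec : ∀ i, 1 ≤ i → i ≤ m → p i ≥ t * p 1 + s * p (i + 1))
    (hfront : p (m + 1) ≥ k * p 1 + l) :
    p 1 ≥ (1 - s) * s ^ m * l /
      (1 - (s + t) + k * s ^ (m + 1) + t * s ^ m - k * s ^ m) := by
  have hden : 1 - (s + t) + k * s ^ (m + 1) + t * s ^ m - k * s ^ m =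
      (1 - s) * (1 - (t * (∑ i ∈ range m, s ^ i) + k * s ^ m)) := by
    linear_combination t * mul_neg_geom_sum s m
  rw [hden, mul_assoc, mul_div_mul_left _ _ (sub_ne_zero.mpr hs1.symm)]
  exact pow_mul_div_one_sub_le_of_recurrence (u := fun i => p (i + 1)) (by omega) hs hst hk1
    (fun i hi => hrec (i + 1) i.succ_pos hi) hfront

end Field

/-- Algebraic core of the 'Lower Bound of Sink Reachability' lemma (Lemma A.1):
given the recurrences `p i ≥ t * p 1 + s * p (i+1)` for `i = 1, …, m` and
`p (m+1) ≥ k * p 1 + l`, we obtain the stated lower bound on `p 1`. -/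
theorem stmt_0 (m : ℕ) (hm : 1 ≤ m) (s t k l : ℝ)
    (hs : 0 < s) (hs1 : s < 1) (ht : 0 ≤ t) (hst : s + t < 1)
    (hk : 0 ≤ k) (hk1 : k ≤ 1) (hl : 0 ≤ l)
    (p : ℕ → ℝ)
    (hrec : ∀ i, 1 ≤ i → i ≤ m → p i ≥ t * p 1 + s * p (i + 1))
    (hfront : p (m + 1) ≥ k * p 1 + l) :
    p 1 ≥ (1 - s) * s ^ m * l /
      (1 - (s + t) + k * s ^ (m + 1) + t * s ^ m - k * s ^ m) :=
  stmt_0_general m hm s t k l hs.le hs1.ne hst hk1 p hrec hfront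
end

section
/- Let n ≥ 1 be a natural number and let δ, α be real numbers with 0 < δ ≤ 1/2 and 0 < α < 1. Set x₀ = δ(1−α) and x₁ = (1−δ)(1−α). Then (1−x₀)·x₀ⁿ / ((1−x₀) − (1−x₀ⁿ)·x₁) > δⁿ·(1−α)^{n+1} / (2α + δⁿ·(1−α)^{n+1}). -/
/-!
Put `p = x₀ⁿ` and note that `x₀ + x₁ = 1 - α`. Both sides are fractions of the form `a / (a + b)`,
so they are compared by cross-multiplying the odds `a : b`. The denominator on the left equals
`p * (1 - x₀) + (1 - p) * α`, so the odds are `p * (1 - x₀) : (1 - p) * α` on the left and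
`p * (1 - α) : 2 * α` on the right, and the claim becomes `(1 - p) * (1 - α) < 2 * (1 - x₀)`.
Now `δ ≤ 1 / 2` means `x₀ ≤ x₁`, that is, `2 * x₀ ≤ 1 - α`, whence `1 - α < 1 < 2 * (1 - x₀)`.
-/

section OrderedField

variable {K : Type*} [Field K] [LinearOrder K] [IsStrictOrderedRing K]

theorem div_add_lt_div_add_iff {a b c d : K} (hab : 0 < a + b) (hcd : 0 < c + d) :
    a / (a + b) < c / (c + d) ↔ a * d < c * b := by
  rw [div_lt_div_iff₀ hab hcd, mul_add, mul_add, mul_comm c a, add_lt_add_iff_left]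

theorem one_sub_mul_add_lt_two_mul_one_sub {x y p : K} (hp : 0 < p) (hxy : x ≤ y)
    (hpos : 0 < x + y) (hlt : x + y < 1) : (1 - p) * (x + y) < 2 * (1 - x) :=
  calc
    (1 - p) * (x + y) < x + y := mul_lt_of_lt_one_left hpos (sub_lt_self 1 hp)
    _ < 2 * (1 - x) := by linarith

theorem mul_add_div_lt_one_sub_mul_div {x y p : K} (hp : 0 < p) (hxy : x ≤ y)
    (hpos : 0 < x + y) (hlt : x + y < 1) :
    p * (x + y) / (2 * (1 - (x + y)) + p * (x + y)) < (1 - x) * p / ((1 - x) - (1 - p) * y) := by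
  have hα : 0 < 1 - (x + y) := sub_pos.2 hlt
  have hy : 0 < y := by linarith
  have hden : (1 - x) - (1 - p) * y = (1 - x) * p + (1 - p) * (1 - (x + y)) := by ring
  have hden_pos : 0 < (1 - x) * p + (1 - p) * (1 - (x + y)) :=
    calc
      0 < 1 - (x + y) + p * y := by positivity
      _ = (1 - x) * p + (1 - p) * (1 - (x + y)) := by ring
  rw [hden, add_comm (2 * _), div_add_lt_div_add_iff (by positivity) hden_pos]
  calc
    p * (x + y) * ((1 - p) * (1 - (x + y)))
      = p * (1 - (x + y)) * ((1 - p) * (x + y)) := by ring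
    _ < p * (1 - (x + y)) * (2 * (1 - x)) :=
      mul_lt_mul_of_pos_left (one_sub_mul_add_lt_two_mul_one_sub hp hxy hpos hlt) (mul_pos hp hα)
    _ = (1 - x) * p * (2 * (1 - (x + y))) := by ring

theorem stmt_3_general (n : ℕ) {δ α x₀ x₁ : K}
    (hδ : 0 < δ) (hδ' : δ ≤ 1 / 2) (hα : 0 < α) (hα' : α < 1)
    (hx₀ : x₀ = δ * (1 - α)) (hx₁ : x₁ = (1 - δ) * (1 - α)) :
    (1 - x₀) * x₀ ^ n / ((1 - x₀) - (1 - x₀ ^ n) * x₁) >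
      δ ^ n * (1 - α) ^ (n + 1) / (2 * α + δ ^ n * (1 - α) ^ (n + 1)) := by
  have hα₁ : 0 < 1 - α := sub_pos.2 hα'
  have hsum : x₀ + x₁ = 1 - α := by rw [hx₀, hx₁]; ring
  have hle : x₀ ≤ x₁ := by
    rw [hx₀, hx₁]
    gcongr
    linarith
  have hx₀_pos : 0 < x₀ := hx₀ ▸ mul_pos hδ hα₁
  have hpow : δ ^ n * (1 - α) ^ (n + 1) = x₀ ^ n * (x₀ + x₁) := by
    rw [hsum, hx₀, mul_pow, pow_succ, mul_assoc]
  have hα_eq : α = 1 - (x₀ + x₁) := by rw [hsum, sub_sub_cancel]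
  rw [hpow, hα_eq]
  exact mul_add_div_lt_one_sub_mul_div (pow_pos hx₀_pos n) hle (by linarith) (by linarith)

end OrderedField

/-- Corollary A.2 ('Another Lower Bound of crossPath Probability'):
with `x₀ = δ(1-α)` and `x₁ = (1-δ)(1-α)`,
`(1-x₀)·x₀ⁿ / ((1-x₀) - (1-x₀ⁿ)·x₁) > δⁿ·(1-α)^(n+1) / (2α + δⁿ·(1-α)^(n+1))`. -/
theorem stmt_3 (n : ℕ) (hn : 1 ≤ n) (δ α x₀ x₁ : ℝ)
    (hδ : 0 < δ) (hδ' : δ ≤ 1 / 2) (hα : 0 < α) (hα' : α < 1)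
    (hx₀ : x₀ = δ * (1 - α)) (hx₁ : x₁ = (1 - δ) * (1 - α)) :
    (1 - x₀) * x₀ ^ n / ((1 - x₀) - (1 - x₀ ^ n) * x₁) >
      δ ^ n * (1 - α) ^ (n + 1) / (2 * α + δ ^ n * (1 - α) ^ (n + 1)) :=
  stmt_3_general n hδ hδ' hα hα' hx₀ hx₁
end

section
/- Let n ≥ 1 and M ≥ 1 be natural numbers, let δ be a real number with 0 < δ ≤ 1/2, and set ε = 1/((n!)²·M^{2n²}). If α is a real number with 0 < α ≤ δⁿ / (8·(n!)²·M^{2n²}), then 8α / (2α + δⁿ·(1−α)^{n+1}) ≤ ε. -/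
/-!
By Bernoulli's inequality `(1 - α) ^ m ≥ 1 - m * α`, so replacing `d * (1 - α) ^ m` by `d` loses
at most `m * d * α`. When `m * d ≤ 2` the summand `2 * α` of the denominator pays for this loss,
and the fraction is at most `8 * α / d`. For `d = δ ^ n` and `m = n + 1` this applies because
`n + 1 ≤ 2 ^ n`.
-/

theorem le_mul_add_mul_one_sub_pow {R : Type*} [CommRing R] [LinearOrder R]
    [IsStrictOrderedRing R] {c d α : R} {m : ℕ} (hd : 0 ≤ d) (hmd : m * d ≤ c)
    (hα₀ : 0 ≤ α) (hα₂ : α ≤ 2) : d ≤ c * α + d * (1 - α) ^ m := by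
  have bernoulli : 1 + m * -α ≤ (1 - α) ^ m := by
    simpa only [sub_eq_add_neg] using one_add_mul_le_pow (neg_le_neg hα₂) m
  calc d = m * d * α + d * (1 + m * -α) := by ring
    _ ≤ c * α + d * (1 - α) ^ m := by gcongr

section LinearOrderedField

variable {𝕜 : Type*} [Field 𝕜] [LinearOrder 𝕜] [IsStrictOrderedRing 𝕜]

theorem add_one_mul_pow_le_one {x : 𝕜} (hx₀ : 0 ≤ x) (hx : x ≤ 1 / 2) (n : ℕ) :
    (n + 1) * x ^ n ≤ 1 := by
  have add_one_le_two_pow : (n + 1 : 𝕜) ≤ 2 ^ n := by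
    exact_mod_cast Nat.lt_two_pow_self (n := n)
  calc (n + 1) * x ^ n ≤ 2 ^ n * (1 / 2) ^ n := by gcongr
    _ = 1 := by rw [← mul_pow, mul_one_div_cancel two_ne_zero, one_pow]

theorem stmt_4_general {n : ℕ} {d α ε : 𝕜} (hd : 0 < d) (hnd : (n + 1) * d ≤ 2)
    (hε : ε ≤ 1) (hα : 0 ≤ α) (hα' : α ≤ ε * d / 8) :
    8 * α / (2 * α + d * (1 - α) ^ (n + 1)) ≤ ε := by
  have hd₂ : d ≤ 2 := (le_mul_of_one_le_left hd.le (by simp)).trans hnd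
  have hεd : ε * d ≤ d := mul_le_of_le_one_left hd.le hε
  have le_denom : d ≤ 2 * α + d * (1 - α) ^ (n + 1) :=
    le_mul_add_mul_one_sub_pow hd.le (by exact_mod_cast hnd) hα (by linarith)
  calc 8 * α / (2 * α + d * (1 - α) ^ (n + 1)) ≤ 8 * α / d := by gcongr
    _ ≤ ε := by rw [div_le_iff₀ hd]; linarith

end LinearOrderedField

theorem one_le_factorial_pow_mul_pow {M : ℕ} (hM : 1 ≤ M) (n k l : ℕ) :
    1 ≤ (n.factorial : ℝ) ^ k * (M : ℝ) ^ l := by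
  exact_mod_cast Nat.mul_pos (pow_pos n.factorial_pos k) (pow_pos hM l)

/-- Key inequality in the proof of part 1 of Lemma 4.2: if
`0 < α ≤ δⁿ / (8·(n!)²·M^(2n²))`, then
`8α / (2α + δⁿ·(1-α)^(n+1)) ≤ ε` where `ε = 1/((n!)²·M^(2n²))`. -/
theorem stmt_4 (n M : ℕ) (hn : 1 ≤ n) (hM : 1 ≤ M) (δ : ℝ)
    (hδ : 0 < δ) (hδ' : δ ≤ 1 / 2) (α : ℝ) (hα : 0 < α)
    (hα' : α ≤ δ ^ n / (8 * (n.factorial : ℝ) ^ 2 * (M : ℝ) ^ (2 * n ^ 2))) :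
    8 * α / (2 * α + δ ^ n * (1 - α) ^ (n + 1)) ≤
      1 / ((n.factorial : ℝ) ^ 2 * (M : ℝ) ^ (2 * n ^ 2)) :=
  stmt_4_general (pow_pos hδ n) ((add_one_mul_pow_le_one hδ.le hδ' n).trans one_le_two)
    (div_le_one_of_le₀ (one_le_factorial_pow_mul_pow hM ..) (by positivity)) hα.le
    (hα'.trans_eq (by ring))
end

section
/- Let n ≥ 1 and M ≥ 1 be natural numbers, let δ be a real number with 0 < δ ≤ 1/2, set ε = 1/((n!)²·M^{2n²}), and let α be a real number with 0 < α ≤ δⁿ / (8·(n!)²·M^{2n²}). Set x₀ = δ(1−α) and x₁ = (1−δ)(1−α). Then (1−x₀)·x₀ⁿ / ((1−x₀) − (1−x₀ⁿ)·x₁) > (4−ε)/4. -/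
/-!
Since `α = 1 - x₀ - x₁` is the probability of being absorbed at each step, the crossing fails with
probability `α (1 - x₀ⁿ) / (α + x₀ⁿ x₁)`. The numerator is less than `α`. In the denominator,
`x₀ⁿ x₁ = δⁿ (1 - α)ⁿ⁺¹ (1 - δ)`, which by Bernoulli's inequality and `1 - δ ≥ 1/2` is at least
`δⁿ (1 - (n + 1) α) / 2`. The loss `(n + 1) δⁿ α / 2` is at most `α / 2` because
`n + 1 ≤ 2ⁿ ≤ δ⁻ⁿ`, so the denominator is at least `δⁿ / 2`, and the failure probability is less
than `2α / δⁿ`.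
-/

section Field

variable {K : Type*} [Field K]

/-- The probability of making `n` consecutive forward steps before being absorbed, where each step
is forward with probability `x₀`, restarts the count with probability `x₁`, and is absorbed
otherwise. It is encoded as the closed-form solution `p` of
`p = x₀ ^ n + (∑ i ∈ Finset.range n, x₀ ^ i) * x₁ * p`, which is `0` by convention where the
denominator vanishes. -/
def crossProb (n : ℕ) (x₀ x₁ : K) : K :=
  (1 - x₀) * x₀ ^ n / ((1 - x₀) - (1 - x₀ ^ n) * x₁)

theorem one_sub_crossProb {n : ℕ} {x₀ x₁ α : K} (hsum : x₀ + x₁ + α = 1)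
    (hden : α + x₀ ^ n * x₁ ≠ 0) :
    1 - crossProb n x₀ x₁ = α * (1 - x₀ ^ n) / (α + x₀ ^ n * x₁) := by
  have hleak : 1 - x₀ = x₁ + α := by linear_combination -hsum
  have hden_eq : 1 - x₀ - (1 - x₀ ^ n) * x₁ = α + x₀ ^ n * x₁ := by
    linear_combination hleak
  rw [crossProb, hden_eq, hleak, one_sub_div hden]
  ring

end Field

section OrderedField

variable {K : Type*} [Field K] [LinearOrder K] [IsStrictOrderedRing K] {δ α ε : K}

theorem add_one_mul_pow_le_one_s5 (n : ℕ) (hδ : 0 ≤ δ) (hδ' : δ ≤ 1 / 2) :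
    (n + 1) * δ ^ n ≤ 1 := by
  have hn : (n : K) + 1 ≤ 2 ^ n := mod_cast Nat.lt_two_pow_self (n := n)
  calc (n + 1) * δ ^ n ≤ 2 ^ n * (1 / 2) ^ n := by gcongr
    _ = 1 := by rw [← mul_pow]; norm_num

theorem pow_div_two_le_add_pow_mul (n : ℕ) (hδ : 0 ≤ δ) (hδ' : δ ≤ 1 / 2) (hα : 0 ≤ α)
    (hα' : α ≤ 1) :
    δ ^ n / 2 ≤ α + (δ * (1 - α)) ^ n * ((1 - δ) * (1 - α)) := by
  have bernoulli : 1 - (n + 1) * α ≤ (1 - α) ^ (n + 1) := by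
    simpa [← sub_eq_add_neg] using one_add_mul_le_pow (a := -α) (by linarith) (n + 1)
  have hloss : (n + 1) * δ ^ n * α ≤ α :=
    mul_le_of_le_one_left hα (add_one_mul_pow_le_one_s5 n hδ hδ')
  have hhalf : 1 / 2 ≤ 1 - δ := by linarith
  have : 0 ≤ 1 - α := sub_nonneg.mpr hα'
  calc δ ^ n / 2 ≤ α + δ ^ n * (1 - (n + 1) * α) * (1 / 2) := by linarith
    _ ≤ α + δ ^ n * (1 - α) ^ (n + 1) * (1 - δ) := by gcongr
    _ = α + (δ * (1 - α)) ^ n * ((1 - δ) * (1 - α)) := by rw [mul_pow]; ring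

theorem one_sub_crossProb_lt (n : ℕ) (hδ : 0 < δ) (hδ' : δ ≤ 1 / 2) (hα : 0 < α)
    (hα' : α < 1) :
    1 - crossProb n (δ * (1 - α)) ((1 - δ) * (1 - α)) < 2 * α / δ ^ n := by
  have hden := pow_div_two_le_add_pow_mul n hδ.le hδ' hα.le hα'.le
  have hpow : 0 < δ ^ n / 2 := by positivity
  have hforward : 0 < (δ * (1 - α)) ^ n := pow_pos (mul_pos hδ (sub_pos.mpr hα')) n
  rw [one_sub_crossProb (α := α) (by ring) (hpow.trans_le hden).ne']
  calc _ < α / (α + (δ * (1 - α)) ^ n * ((1 - δ) * (1 - α))) :=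
        div_lt_div_of_pos_right (mul_lt_of_lt_one_right hα (sub_lt_self 1 hforward))
          (hpow.trans_le hden)
    _ ≤ α / (δ ^ n / 2) := by gcongr
    _ = 2 * α / δ ^ n := by field_simp

theorem stmt_5_general (n : ℕ) (hδ : 0 < δ) (hδ' : δ ≤ 1 / 2) (hα : 0 < α) (hα₁ : α < 1)
    (hα' : α ≤ ε * δ ^ n / 8) :
    (4 - ε) / 4 < crossProb n (δ * (1 - α)) ((1 - δ) * (1 - α)) := by
  have hfail : 2 * α / δ ^ n ≤ ε / 4 := by
    rw [div_le_iff₀ (pow_pos hδ n)]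
    linarith
  linarith [one_sub_crossProb_lt n hδ hδ' hα hα₁]

end OrderedField

/-- Part 1 of Lemma 4.2 combined with Lemma 3.1: with `x₀ = δ(1-α)` and
`x₁ = (1-δ)(1-α)`, if `0 < α ≤ δⁿ/(8(n!)²M^(2n²))`, then
`(1-x₀)·x₀ⁿ / ((1-x₀) - (1-x₀ⁿ)·x₁) > (4-ε)/4` where `ε = 1/((n!)²·M^(2n²))`. -/
theorem stmt_5 (n M : ℕ) (hn : 1 ≤ n) (hM : 1 ≤ M) (δ : ℝ)
    (hδ : 0 < δ) (hδ' : δ ≤ 1 / 2) (α : ℝ) (hα : 0 < α)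
    (hα' : α ≤ δ ^ n / (8 * (n.factorial : ℝ) ^ 2 * (M : ℝ) ^ (2 * n ^ 2)))
    (x₀ x₁ : ℝ) (hx₀ : x₀ = δ * (1 - α)) (hx₁ : x₁ = (1 - δ) * (1 - α)) :
    (1 - x₀) * x₀ ^ n / ((1 - x₀) - (1 - x₀ ^ n) * x₁) >
      (4 - 1 / ((n.factorial : ℝ) ^ 2 * (M : ℝ) ^ (2 * n ^ 2))) / 4 := by
  subst hx₀ hx₁
  have hC : 1 ≤ (n.factorial : ℝ) ^ 2 * (M : ℝ) ^ (2 * n ^ 2) :=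
    one_le_mul_of_one_le_of_one_le (one_le_pow₀ (mod_cast n.factorial_pos))
      (one_le_pow₀ (mod_cast hM))
  have hα₁ : α < 1 := by
    refine hα'.trans_lt ((div_lt_one (by linarith)).mpr ?_)
    linarith [pow_le_one₀ (n := n) hδ.le (by linarith)]
  exact stmt_5_general n hδ hδ' hα hα₁ (hα'.trans_eq (by field_simp))
end

section
/- Let n ≥ 1 be a natural number and let δ, α, β be real numbers with 0 < δ ≤ 1/2 and 0 < β < α < 1. Set x₂ = δ(1−β), x₃ = (1−δ)(1−β), x₄ = δα and x₅ = δ(1−α) + (1−δ)(1−β). Then (1−β) · (1−x₂)·x₂^{n−1}·x₄ / (1 − (x₂+x₃) + x₅·x₂ⁿ + x₃·x₂^{n−1} − x₅·x₂^{n−1}) > (δⁿ·(1−δ) − β/α) / (δⁿ·(1−δ) + β/α). -/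
/-!
Put `x = δ(1-β)`, `q = xⁿ`, `s = δ xⁿ⁻¹ (1-x)` and `c = δⁿ(1-δ)`. The left-hand side is
`(1-β)αs / (αs + β(1-q-s))` and the right-hand side is `(cα-β) / (cα+β)`. If `cα ≤ β`, then `0`
separates them. Otherwise cross-multiplication reduces the claim to `(cα-β)(1-q) < 2s(α-β)`, which
holds as soon as `c ≤ 2s`. Since `s ≥ (1-β)ⁿ⁻¹ c`, Bernoulli's inequality reduces this to
`2(n-1)β ≤ 1`; as `β < δⁿ⁻¹(1-δ)`, it follows from `u e⁻ᵘ ≤ 1/2` for `u = (n-1)(1-δ)`.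
-/

lemma natCast_mul_one_sub_mul_pow_le_half (m : ℕ) {x : ℝ} (hx : 0 ≤ x) :
    m * (1 - x) * x ^ m ≤ 1 / 2 := by
  have exp_mul_le_one : Real.exp (1 - x) * x ≤ 1 :=
    calc Real.exp (1 - x) * x ≤ Real.exp (1 - x) * Real.exp (x - 1) := by
          gcongr
          linarith [Real.add_one_le_exp (x - 1)]
      _ = 1 := by rw [← Real.exp_add, sub_add_sub_cancel, sub_self, Real.exp_zero]
  calc m * (1 - x) * x ^ m = 2 * (m * (1 - x)) * x ^ m / 2 := by ring
    _ ≤ Real.exp (m * (1 - x)) * x ^ m / 2 := by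
        gcongr
        exact Real.two_mul_le_exp
    _ = (Real.exp (1 - x) * x) ^ m / 2 := by rw [mul_pow, ← Real.exp_nat_mul]
    _ ≤ 1 / 2 := by
        gcongr
        exact pow_le_one₀ (by positivity) exp_mul_le_one

lemma half_le_one_sub_pow {m : ℕ} {x β : ℝ} (hx : 0 ≤ x) (hβ : β ≤ 2)
    (hβx : β ≤ (1 - x) * x ^ m) : 1 / 2 ≤ (1 - β) ^ m := by
  have natCast_mul_le_half : m * β ≤ 1 / 2 :=
    calc m * β ≤ m * ((1 - x) * x ^ m) := by gcongr
      _ = m * (1 - x) * x ^ m := (mul_assoc _ _ _).symm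
      _ ≤ 1 / 2 := natCast_mul_one_sub_mul_pow_le_half m hx
  have bernoulli := one_add_mul_le_pow (a := -β) (by linarith) m
  rw [← sub_eq_add_neg] at bernoulli
  linarith

lemma pow_succ_mul_one_sub_le_two_mul {m : ℕ} {δ β : ℝ} (hδ : 0 ≤ δ) (hδ1 : δ ≤ 1)
    (hβ : 0 ≤ β) (hβ1 : β ≤ 1) (hβδ : β ≤ δ ^ (m + 1) * (1 - δ)) :
    δ ^ (m + 1) * (1 - δ) ≤ 2 * (δ * (δ * (1 - β)) ^ m * (1 - δ * (1 - β))) := by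
  have : 0 ≤ 1 - δ := sub_nonneg.mpr hδ1
  have half_le : 1 / 2 ≤ (1 - β) ^ m := by
    refine half_le_one_sub_pow hδ (by linarith) (hβδ.trans ?_)
    rw [mul_comm]
    gcongr ?_ * ?_
    exact pow_le_pow_of_le_one hδ hδ1 m.le_succ
  calc δ ^ (m + 1) * (1 - δ) = 2 * (δ * (δ ^ m * (1 / 2)) * (1 - δ)) := by ring
    _ ≤ 2 * (δ * (δ ^ m * (1 - β) ^ m) * (1 - δ * (1 - β))) := by
        gcongr
        exact mul_le_of_le_one_right hδ (by linarith)
    _ = 2 * (δ * (δ * (1 - β)) ^ m * (1 - δ * (1 - β))) := by rw [mul_pow]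

lemma mul_pow_mul_one_sub_add_pow_succ_le_one {m : ℕ} {δ x : ℝ} (hδ : δ ≤ 1) (hx : 0 ≤ x)
    (hx1 : x ≤ 1) : δ * x ^ m * (1 - x) + x ^ (m + 1) ≤ 1 := by
  have : 0 ≤ 1 - x := sub_nonneg.mpr hx1
  calc δ * x ^ m * (1 - x) + x ^ (m + 1) ≤ 1 * x ^ m * (1 - x) + x ^ (m + 1) := by gcongr
    _ = x ^ m := by ring
    _ ≤ 1 := pow_le_one₀ hx hx1

section Ratio

variable {c s q α β : ℝ}

lemma sub_mul_one_sub_lt_two_mul_sub (hc : c ≤ 1) (hβ : 0 ≤ β) (hβα : β ≤ α)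
    (hβc : β < c * α) (hq : 0 < q) (hcs : c ≤ 2 * s) :
    (c * α - β) * (1 - q) < 2 * s * (α - β) :=
  calc (c * α - β) * (1 - q) < c * α - β :=
        mul_lt_of_lt_one_right (sub_pos.mpr hβc) (sub_lt_self 1 hq)
    _ ≤ c * (α - β) := by linarith [mul_le_of_le_one_left hβ hc]
    _ ≤ 2 * s * (α - β) := mul_le_mul_of_nonneg_right hcs (sub_nonneg.mpr hβα)

lemma sub_div_add_lt_of_lt_mul (hc : c ≤ 1) (hα : 0 < α) (hα1 : α ≤ 1) (hβ : 0 < β)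
    (hβc : β < c * α) (hq : 0 < q) (hsq : s + q ≤ 1) (hcs : c ≤ 2 * s) :
    (c * α - β) / (c * α + β) < (1 - β) * (α * s) / (α * s + β * (1 - q - s)) := by
  have c_pos : 0 < c := pos_of_mul_pos_left (hβ.trans hβc) hα.le
  have s_pos : 0 < s := by linarith
  have β_le_α : β ≤ α := hβc.le.trans (mul_le_of_le_one_left hα.le hc)
  have denom_pos : 0 < α * s + β * (1 - q - s) :=
    add_pos_of_pos_of_nonneg (by positivity) (mul_nonneg hβ.le (by linarith))
  have two_mul_sub_le : 2 * s * (α - β) ≤ s * (2 * α - β - α * β + c * α * (1 - α)) := by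
    have αβ_le_β : α * β ≤ β := mul_le_of_le_one_left hβ.le hα1
    have cα_nonneg : 0 ≤ c * α * (1 - α) := mul_nonneg (by positivity) (sub_nonneg.mpr hα1)
    rw [mul_comm 2 s, mul_assoc]
    gcongr
    linarith
  have gap_pos : 0 < s * (2 * α - β - α * β + c * α * (1 - α)) - (c * α - β) * (1 - q) :=
    sub_pos.mpr ((sub_mul_one_sub_lt_two_mul_sub hc hβ.le β_le_α hβc hq hcs).trans_le
      two_mul_sub_le)
  rw [div_lt_div_iff₀ (by positivity) denom_pos, ← sub_pos]
  calc 0 < β * (s * (2 * α - β - α * β + c * α * (1 - α)) - (c * α - β) * (1 - q)) :=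
        mul_pos hβ gap_pos
    _ = _ := by ring

lemma sub_div_add_lt (hc : 0 ≤ c) (hc1 : c ≤ 1) (hs : 0 < s) (hq : 0 < q) (hsq : s + q ≤ 1)
    (hα : 0 < α) (hα1 : α ≤ 1) (hβ : 0 < β) (hβ1 : β < 1) (hcs : β < c * α → c ≤ 2 * s) :
    (c - β / α) / (c + β / α) < (1 - β) * (α * s) / (α * s + β * (1 - q - s)) := by
  have clear_div : (c - β / α) / (c + β / α) = (c * α - β) / (c * α + β) := by
    field_simp
  rw [clear_div]
  rcases lt_or_ge β (c * α) with hβc | hβc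
  · exact sub_div_add_lt_of_lt_mul hc1 hα hα1 hβ hβc hq hsq (hcs hβc)
  · have lhs_nonpos : (c * α - β) / (c * α + β) ≤ 0 :=
      div_nonpos_of_nonpos_of_nonneg (sub_nonpos.mpr hβc) (by positivity)
    have denom_pos : 0 < α * s + β * (1 - q - s) :=
      add_pos_of_pos_of_nonneg (by positivity) (mul_nonneg hβ.le (by linarith))
    exact lhs_nonpos.trans_lt (div_pos (mul_pos (sub_pos.mpr hβ1) (by positivity)) denom_pos)

end Ratio

theorem stmt_6_general (n : ℕ) (hn : 1 ≤ n) (δ α β x₂ x₃ x₄ x₅ : ℝ)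
    (hδ : 0 < δ) (hδ1 : δ ≤ 1) (hα : 0 < α) (hα1 : α ≤ 1) (hβ : 0 < β) (hβ1 : β < 1)
    (hx₂ : x₂ = δ * (1 - β)) (hx₃ : x₃ = (1 - δ) * (1 - β))
    (hx₄ : x₄ = δ * α) (hx₅ : x₅ = δ * (1 - α) + (1 - δ) * (1 - β)) :
    (1 - β) * ((1 - x₂) * x₂ ^ (n - 1) * x₄) /
        (1 - (x₂ + x₃) + x₅ * x₂ ^ n + x₃ * x₂ ^ (n - 1) - x₅ * x₂ ^ (n - 1)) >
      (δ ^ n * (1 - δ) - β / α) / (δ ^ n * (1 - δ) + β / α) := by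
  obtain ⟨m, rfl⟩ := Nat.exists_eq_add_of_le' hn
  have x₂_pos : 0 < x₂ := hx₂ ▸ mul_pos hδ (sub_pos.mpr hβ1)
  have x₂_lt_one : x₂ < 1 :=
    hx₂ ▸ (mul_le_of_le_one_left (sub_nonneg.mpr hβ1.le) hδ1).trans_lt (sub_lt_self 1 hβ)
  set s := δ * x₂ ^ m * (1 - x₂) with hs
  have s_pos : 0 < s := mul_pos (by positivity) (sub_pos.mpr x₂_lt_one)
  have num_eq : (1 - x₂) * x₂ ^ m * x₄ = α * s := by rw [hx₄, hs]; ring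
  have denom_eq : 1 - (x₂ + x₃) + x₅ * x₂ ^ (m + 1) + x₃ * x₂ ^ m - x₅ * x₂ ^ m =
      α * s + β * (1 - x₂ ^ (m + 1) - s) := by
    rw [hs, pow_succ]
    generalize x₂ ^ m = p
    rw [hx₅, hx₃, hx₂]
    ring
  have c_nonneg : 0 ≤ δ ^ (m + 1) * (1 - δ) := mul_nonneg (by positivity) (sub_nonneg.mpr hδ1)
  have c_le_one : δ ^ (m + 1) * (1 - δ) ≤ 1 :=
    mul_le_one₀ (pow_le_one₀ hδ.le hδ1) (sub_nonneg.mpr hδ1) (sub_le_self 1 hδ.le)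
  rw [Nat.add_sub_cancel, num_eq, denom_eq]
  refine sub_div_add_lt c_nonneg c_le_one s_pos (by positivity)
    (mul_pow_mul_one_sub_add_pow_succ_le_one hδ1 x₂_pos.le x₂_lt_one.le) hα hα1 hβ hβ1 fun hβc ↦ ?_
  rw [hs, hx₂]
  exact pow_succ_mul_one_sub_le_two_mul hδ.le hδ1 hβ.le hβ1.le
    (hβc.le.trans (mul_le_of_le_one_right c_nonneg hα1))

/-- Corollary A.4 ('Another Lower Bound of winEven Probability'): with
`x₂ = δ(1-β)`, `x₃ = (1-δ)(1-β)`, `x₄ = δα`, `x₅ = δ(1-α) + (1-δ)(1-β)`,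
the left-hand side of Lemma 3.2 is bounded from below by
`(δⁿ(1-δ) - β/α) / (δⁿ(1-δ) + β/α)`. -/
theorem stmt_6 (n : ℕ) (hn : 1 ≤ n) (δ α β x₂ x₃ x₄ x₅ : ℝ)
    (hδ : 0 < δ) (hδ' : δ ≤ 1 / 2)
    (hβ : 0 < β) (hβα : β < α) (hα1 : α < 1)
    (hx₂ : x₂ = δ * (1 - β)) (hx₃ : x₃ = (1 - δ) * (1 - β))
    (hx₄ : x₄ = δ * α) (hx₅ : x₅ = δ * (1 - α) + (1 - δ) * (1 - β)) :
    (1 - β) * ((1 - x₂) * x₂ ^ (n - 1) * x₄) /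
        (1 - (x₂ + x₃) + x₅ * x₂ ^ n + x₃ * x₂ ^ (n - 1) - x₅ * x₂ ^ (n - 1)) >
      (δ ^ n * (1 - δ) - β / α) / (δ ^ n * (1 - δ) + β / α) :=
  stmt_6_general n hn δ α β x₂ x₃ x₄ x₅ hδ (by linarith) (hβ.trans hβα) hα1.le hβ
    (hβα.trans hα1) hx₂ hx₃ hx₄ hx₅
end

section
/- Let n ≥ 1 and M ≥ 1 be natural numbers, let δ, α, β be real numbers with 0 < δ ≤ 1/2, 0 < β < α < 1 and β/α ≤ δⁿ·(1−δ) / (8·(n!)²·M^{2n²} + 1), and set ε = 1/((n!)²·M^{2n²}). Set x₂ = δ(1−β), x₃ = (1−δ)(1−β), x₄ = δα and x₅ = δ(1−α) + (1−δ)(1−β). Then (1−β) · (1−x₂)·x₂^{n−1}·x₄ / (1 − (x₂+x₃) + x₅·x₂ⁿ + x₃·x₂^{n−1} − x₅·x₂^{n−1}) > 4/(4+ε). -/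
/-!
Write `A = (1 - x₂) x₂ⁿ⁻¹ x₄`, so that the winEven bound is `(1 - β) A / D`. The denominator
collapses to `D = A + β r` with `r = 1 - δ x₂ⁿ⁻¹ (1 + x₃) ∈ [0, 1]`, and `A < 1`, whence
`4 D ≤ 4 (A + β) < 4 (1 - β) A + 8 β`. It remains to see that `8 β ≤ ε (1 - β) A`. The ratio
condition gives `β (8/ε + 1) ≤ α δⁿ (1 - δ)`, and `(1 - β) A ≥ α δⁿ (1 - δ) (1 - β)ⁿ`. Because
`n δⁿ (1 - δ) ≤ 1`, Bernoulli's inequality shows that the factor `(1 - β)ⁿ` costs at most the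
summand `1` in `8/ε + 1`.
-/

section OrderedRing

variable {R : Type*} [CommRing R] [LinearOrder R] [IsStrictOrderedRing R]

theorem natCast_mul_pow_mul_one_sub_le_one {δ : R} (hδ₀ : 0 ≤ δ) (hδ₁ : δ ≤ 1) (n : ℕ) :
    n * (δ ^ n * (1 - δ)) ≤ 1 := by
  have card_mul_le_sum : n * δ ^ n ≤ ∑ i ∈ Finset.range n, δ ^ i := by
    simpa using Finset.card_nsmul_le_sum (Finset.range n) (δ ^ ·) (δ ^ n)
      fun i hi ↦ pow_le_pow_of_le_one hδ₀ hδ₁ (Finset.mem_range.mp hi).le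
  calc n * (δ ^ n * (1 - δ)) = n * δ ^ n * (1 - δ) := by ring
    _ ≤ (∑ i ∈ Finset.range n, δ ^ i) * (1 - δ) :=
        mul_le_mul_of_nonneg_right card_mul_le_sum (sub_nonneg.mpr hδ₁)
    _ = 1 - δ ^ n := geom_sum_mul_neg δ n
    _ ≤ 1 := sub_le_self 1 (pow_nonneg hδ₀ n)

theorem mul_le_mul_one_sub_pow_of_mul_add_one_le {β c q : R} {n : ℕ} (hβ₀ : 0 ≤ β) (hβ₂ : β ≤ 2)
    (hq : 0 ≤ q) (hnq : n * q ≤ 1) (h : β * (c + 1) ≤ q) : β * c ≤ q * (1 - β) ^ n := by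
  have bernoulli : 1 - n * β ≤ (1 - β) ^ n := by
    simpa [← sub_eq_add_neg] using one_add_mul_le_pow (neg_le_neg hβ₂) n
  calc β * c = β * (c + 1) - β * 1 := by ring
    _ ≤ q - β * (n * q) := sub_le_sub h (mul_le_mul_of_nonneg_left hnq hβ₀)
    _ = q * (1 - n * β) := by ring
    _ ≤ q * (1 - β) ^ n := mul_le_mul_of_nonneg_left bernoulli hq

end OrderedRing

theorem four_div_four_add_lt_div {K : Type*} [Field K] [LinearOrder K] [IsStrictOrderedRing K]
    {ε β A D : K} (hε : 0 < ε) (hβ : 0 < β) (hA : A < 1) (hD : 0 < D) (hDA : D ≤ A + β)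
    (h : 8 * β ≤ ε * ((1 - β) * A)) : 4 / (4 + ε) < (1 - β) * A / D := by
  rw [div_lt_div_iff₀ (by positivity) hD]
  calc 4 * D ≤ 4 * (A + β) := by gcongr
    _ = 4 * ((1 - β) * A) + 4 * (β * A) + 4 * β := by ring
    _ < 4 * ((1 - β) * A) + 4 * (β * 1) + 4 * β := by gcongr
    _ ≤ (1 - β) * A * (4 + ε) := by linarith

section Gadget

/-- The factor `(1 - x₂) x₂ᵐ x₄` of the numerator of the winEven lower bound of Lemma 3.2, with
`x₂ = δ(1-β)` and `x₄ = δα` expanded. The paper's exponent `n - 1` is `m`, which avoids truncated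
subtraction. -/
def winEvenWeight (δ α β : ℝ) (m : ℕ) : ℝ :=
  (1 - δ * (1 - β)) * (δ * (1 - β)) ^ m * (δ * α)

variable {δ α β : ℝ}

theorem winEvenWeight_pos (hδ₀ : 0 < δ) (hδ₁ : δ < 1) (hα₀ : 0 < α) (hβ₀ : 0 ≤ β) (hβ₁ : β < 1)
    (m : ℕ) : 0 < winEvenWeight δ α β m := by
  have x₂_pos : 0 < δ * (1 - β) := mul_pos hδ₀ (by linarith)
  have x₂_lt_one : δ * (1 - β) < 1 :=
    mul_lt_one_of_nonneg_of_lt_one_left hδ₀.le hδ₁ (by linarith)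
  exact mul_pos (mul_pos (sub_pos.mpr x₂_lt_one) (pow_pos x₂_pos m)) (mul_pos hδ₀ hα₀)

theorem winEvenWeight_lt_one (hδ₀ : 0 ≤ δ) (hδ₁ : δ < 1) (hα₀ : 0 ≤ α) (hα₁ : α ≤ 1)
    (hβ₀ : 0 ≤ β) (hβ₁ : β ≤ 1) (m : ℕ) : winEvenWeight δ α β m < 1 := by
  have x₂_nonneg : 0 ≤ δ * (1 - β) := mul_nonneg hδ₀ (by linarith)
  have x₂_le_one : δ * (1 - β) ≤ 1 := mul_le_one₀ hδ₁.le (by linarith) (by linarith)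
  have one_sub_x₂_mul_pow_le_one : (1 - δ * (1 - β)) * (δ * (1 - β)) ^ m ≤ 1 :=
    mul_le_one₀ (by linarith) (pow_nonneg x₂_nonneg m) (pow_le_one₀ x₂_nonneg x₂_le_one)
  calc winEvenWeight δ α β m ≤ δ * α :=
        mul_le_of_le_one_left (mul_nonneg hδ₀ hα₀) one_sub_x₂_mul_pow_le_one
    _ < 1 := mul_lt_one_of_nonneg_of_lt_one_left hδ₀ hδ₁ hα₁

theorem mul_one_sub_pow_le_one_sub_mul_winEvenWeight (hδ₀ : 0 ≤ δ) (hα₀ : 0 ≤ α) (hβ₀ : 0 ≤ β)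
    (hβ₁ : β ≤ 1) (m : ℕ) :
    α * (δ ^ (m + 1) * (1 - δ)) * (1 - β) ^ (m + 1) ≤ (1 - β) * winEvenWeight δ α β m := by
  have one_sub_β_nonneg : 0 ≤ 1 - β := sub_nonneg.mpr hβ₁
  have x₂_le : δ * (1 - β) ≤ δ := mul_le_of_le_one_right hδ₀ (sub_le_self 1 hβ₀)
  have factor_nonneg : 0 ≤ (1 - β) * ((δ * (1 - β)) ^ m * (δ * α)) :=
    mul_nonneg one_sub_β_nonneg
      (mul_nonneg (pow_nonneg (mul_nonneg hδ₀ one_sub_β_nonneg) m) (mul_nonneg hδ₀ hα₀))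
  calc α * (δ ^ (m + 1) * (1 - δ)) * (1 - β) ^ (m + 1)
      = (1 - δ) * ((1 - β) * ((δ * (1 - β)) ^ m * (δ * α))) := by rw [mul_pow]; ring
    _ ≤ (1 - δ * (1 - β)) * ((1 - β) * ((δ * (1 - β)) ^ m * (δ * α))) :=
        mul_le_mul_of_nonneg_right (sub_le_sub_left x₂_le 1) factor_nonneg
    _ = (1 - β) * winEvenWeight δ α β m := by rw [winEvenWeight]; ring

theorem eight_mul_le_mul_one_sub_mul_winEvenWeight {ε : ℝ} (hε : 0 < ε) (hδ₀ : 0 ≤ δ) (hδ₁ : δ ≤ 1)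
    (hα₀ : 0 ≤ α) (hα₁ : α ≤ 1) (hβ₀ : 0 ≤ β) (hβ₁ : β ≤ 1) {m : ℕ}
    (h : β * (8 / ε + 1) ≤ α * (δ ^ (m + 1) * (1 - δ))) :
    8 * β ≤ ε * ((1 - β) * winEvenWeight δ α β m) := by
  have pow_mul_one_sub_nonneg : 0 ≤ δ ^ (m + 1) * (1 - δ) :=
    mul_nonneg (pow_nonneg hδ₀ _) (sub_nonneg.mpr hδ₁)
  have succ_mul_le_one : (m + 1 : ℕ) * (α * (δ ^ (m + 1) * (1 - δ))) ≤ 1 :=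
    (mul_le_mul_of_nonneg_left (mul_le_of_le_one_left pow_mul_one_sub_nonneg hα₁)
      (Nat.cast_nonneg _)).trans (natCast_mul_pow_mul_one_sub_le_one hδ₀ hδ₁ (m + 1))
  have mul_div_le : β * (8 / ε) ≤ (1 - β) * winEvenWeight δ α β m :=
    calc β * (8 / ε) ≤ α * (δ ^ (m + 1) * (1 - δ)) * (1 - β) ^ (m + 1) :=
          mul_le_mul_one_sub_pow_of_mul_add_one_le hβ₀ (by linarith)
            (mul_nonneg hα₀ pow_mul_one_sub_nonneg) succ_mul_le_one h
      _ ≤ (1 - β) * winEvenWeight δ α β m :=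
          mul_one_sub_pow_le_one_sub_mul_winEvenWeight hδ₀ hα₀ hβ₀ hβ₁ m
  calc 8 * β = ε * (β * (8 / ε)) := by field_simp
    _ ≤ ε * ((1 - β) * winEvenWeight δ α β m) := mul_le_mul_of_nonneg_left mul_div_le hε.le

/-- The denominator of the winEven lower bound of Lemma 3.2, with `x₂, …, x₅` expanded; the
exponents are those of `winEvenWeight`. -/
def winEvenDenom (δ α β : ℝ) (m : ℕ) : ℝ :=
  1 - (δ * (1 - β) + (1 - δ) * (1 - β))
    + (δ * (1 - α) + (1 - δ) * (1 - β)) * (δ * (1 - β)) ^ (m + 1)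
    + (1 - δ) * (1 - β) * (δ * (1 - β)) ^ m
    - (δ * (1 - α) + (1 - δ) * (1 - β)) * (δ * (1 - β)) ^ m

theorem winEvenDenom_eq_winEvenWeight_add (δ α β : ℝ) (m : ℕ) :
    winEvenDenom δ α β m =
      winEvenWeight δ α β m + β * (1 - δ * (δ * (1 - β)) ^ m * (1 + (1 - δ) * (1 - β))) := by
  rw [winEvenDenom, winEvenWeight, pow_succ]
  ring

theorem winEvenDenom_mem_Icc (hδ₀ : 0 ≤ δ) (hδ₁ : δ ≤ 1) (hβ₀ : 0 ≤ β) (hβ₁ : β ≤ 1) (m : ℕ) :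
    winEvenDenom δ α β m ∈ Set.Icc (winEvenWeight δ α β m) (winEvenWeight δ α β m + β) := by
  have x₂_nonneg : 0 ≤ δ * (1 - β) := mul_nonneg hδ₀ (by linarith)
  have x₂_pow_le_one : (δ * (1 - β)) ^ m ≤ 1 :=
    pow_le_one₀ x₂_nonneg (mul_le_one₀ hδ₁ (by linarith) (by linarith))
  have x₃_nonneg : 0 ≤ (1 - δ) * (1 - β) := mul_nonneg (by linarith) (by linarith)
  have x₃_le : (1 - δ) * (1 - β) ≤ 1 - δ := mul_le_of_le_one_right (by linarith) (by linarith)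
  have defect_nonneg : 0 ≤ δ * (δ * (1 - β)) ^ m * (1 + (1 - δ) * (1 - β)) :=
    mul_nonneg (mul_nonneg hδ₀ (pow_nonneg x₂_nonneg m)) (add_nonneg zero_le_one x₃_nonneg)
  have defect_le_one : δ * (δ * (1 - β)) ^ m * (1 + (1 - δ) * (1 - β)) ≤ 1 :=
    calc δ * (δ * (1 - β)) ^ m * (1 + (1 - δ) * (1 - β)) ≤ δ * 1 * (1 + (1 - δ)) := by gcongr
      _ = 1 - (1 - δ) ^ 2 := by ring
      _ ≤ 1 := sub_le_self 1 (sq_nonneg _)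
  rw [winEvenDenom_eq_winEvenWeight_add]
  exact ⟨le_add_of_nonneg_right (mul_nonneg hβ₀ (sub_nonneg.mpr defect_le_one)),
    add_le_add_right (mul_le_of_le_one_right hβ₀ (sub_le_self 1 defect_nonneg)) _⟩

end Gadget

theorem stmt_8_general {n : ℕ} (hn : 1 ≤ n) {ε δ α β : ℝ} (hε : 0 < ε) (hδ₀ : 0 < δ) (hδ₁ : δ < 1)
    (hα₀ : 0 < α) (hα₁ : α ≤ 1) (hβ₀ : 0 < β)
    (hratio : β / α ≤ δ ^ n * (1 - δ) / (8 / ε + 1)) {x₂ x₃ x₄ x₅ : ℝ}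
    (hx₂ : x₂ = δ * (1 - β)) (hx₃ : x₃ = (1 - δ) * (1 - β))
    (hx₄ : x₄ = δ * α) (hx₅ : x₅ = δ * (1 - α) + (1 - δ) * (1 - β)) :
    (1 - β) * ((1 - x₂) * x₂ ^ (n - 1) * x₄) /
        (1 - (x₂ + x₃) + x₅ * x₂ ^ n + x₃ * x₂ ^ (n - 1) - x₅ * x₂ ^ (n - 1)) >
      4 / (4 + ε) := by
  obtain ⟨m, rfl⟩ : ∃ m, n = m + 1 := ⟨n - 1, by omega⟩
  subst hx₂ hx₃ hx₄ hx₅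
  have mul_add_one_le : β * (8 / ε + 1) ≤ α * (δ ^ (m + 1) * (1 - δ)) := by
    rwa [div_le_div_iff₀ hα₀ (by positivity), mul_comm _ α] at hratio
  have hβ₁ : β < 1 :=
    calc β < β * (8 / ε + 1) := lt_mul_of_one_lt_right hβ₀ (lt_add_of_pos_left 1 (by positivity))
      _ ≤ α * (δ ^ (m + 1) * (1 - δ)) := mul_add_one_le
      _ ≤ 1 := mul_le_one₀ hα₁ (mul_nonneg (pow_nonneg hδ₀.le _) (by linarith))
          (mul_le_one₀ (pow_le_one₀ hδ₀.le hδ₁.le) (by linarith) (by linarith))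
  have weight_pos : 0 < winEvenWeight δ α β m := winEvenWeight_pos hδ₀ hδ₁ hα₀ hβ₀.le hβ₁ m
  obtain ⟨weight_le_denom, denom_le⟩ :=
    winEvenDenom_mem_Icc (α := α) hδ₀.le hδ₁.le hβ₀.le hβ₁.le m
  exact four_div_four_add_lt_div hε hβ₀
    (winEvenWeight_lt_one hδ₀.le hδ₁ hα₀.le hα₁ hβ₀.le hβ₁.le m)
    (weight_pos.trans_le weight_le_denom) denom_le
    (eight_mul_le_mul_one_sub_mul_winEvenWeight hε hδ₀.le hδ₁.le hα₀.le hα₁ hβ₀.le hβ₁.le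
      mul_add_one_le)

/-- Part 2 of Lemma 4.2 combined with Lemma 3.2: with
`x₂ = δ(1-β)`, `x₃ = (1-δ)(1-β)`, `x₄ = δα`, `x₅ = δ(1-α) + (1-δ)(1-β)`, and
`β/α ≤ δⁿ(1-δ)/(8(n!)²M^(2n²)+1)`, the winEven lower bound exceeds `4/(4+ε)`
where `ε = 1/((n!)²·M^(2n²))`. -/
theorem stmt_8 (n M : ℕ) (hn : 1 ≤ n) (hM : 1 ≤ M) (δ α β : ℝ)
    (hδ : 0 < δ) (hδ' : δ ≤ 1 / 2)
    (hβ : 0 < β) (hβα : β < α) (hα1 : α < 1)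
    (hratio : β / α ≤ δ ^ n * (1 - δ) /
      (8 * (n.factorial : ℝ) ^ 2 * (M : ℝ) ^ (2 * n ^ 2) + 1))
    (x₂ x₃ x₄ x₅ : ℝ)
    (hx₂ : x₂ = δ * (1 - β)) (hx₃ : x₃ = (1 - δ) * (1 - β))
    (hx₄ : x₄ = δ * α) (hx₅ : x₅ = δ * (1 - α) + (1 - δ) * (1 - β)) :
    (1 - β) * ((1 - x₂) * x₂ ^ (n - 1) * x₄) /
        (1 - (x₂ + x₃) + x₅ * x₂ ^ n + x₃ * x₂ ^ (n - 1) - x₅ * x₂ ^ (n - 1)) >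
      4 / (4 + 1 / ((n.factorial : ℝ) ^ 2 * (M : ℝ) ^ (2 * n ^ 2))) :=
  stmt_8_general hn (by positivity) hδ (by linarith) (hβ.trans hβα) hα1.le hβ
    (by simpa only [div_div_eq_mul_div, div_one, mul_assoc] using hratio) hx₂ hx₃ hx₄ hx₅
end

section
/- Let ε > 0 be a real number and set x = (4−ε)/4 and y = 4/(4+ε). Let P, P′ be real numbers with 0 ≤ P ≤ 1 and 0 ≤ P′ ≤ 1, and let W, W′ be real numbers such that W ≤ P + 1 − x·y, W′ ≥ y·P′ − y + x·y, and P′ > P + ε. Then W′ > W. -/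
/-!
Write `l = y * P' - y + x * y` and `u = P + 1 - x * y` for the two bounds. Their difference is
`l - u = (y * (P' - P) - 2 * (1 - x * y)) + (1 - y) * (1 - P)`, whose last summand is nonnegative
when `y, P ≤ 1`. So a gap `P' - P` with `y * (P' - P) > 2 * (1 - x * y)` separates the bounds, and
`x = (4 - ε) / 4`, `y = 4 / (4 + ε)` are calibrated so that `2 * (1 - x * y) = y * ε`.
-/

theorem add_one_sub_mul_lt_mul_sub_add_mul {R : Type*} [CommRing R] [LinearOrder R]
    [IsStrictOrderedRing R] {x y P P' : R} (hy : y ≤ 1) (hP : P ≤ 1)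
    (hgap : 2 * (1 - x * y) < y * (P' - P)) :
    P + 1 - x * y < y * P' - y + x * y := by
  rw [← sub_pos]
  calc 0 < (y * (P' - P) - 2 * (1 - x * y)) + (1 - y) * (1 - P) :=
        add_pos_of_pos_of_nonneg (sub_pos.mpr hgap)
          (mul_nonneg (sub_nonneg.mpr hy) (sub_nonneg.mpr hP))
    _ = y * P' - y + x * y - (P + 1 - x * y) := by ring

theorem two_mul_one_sub_four_sub_div_mul_four_div {K : Type*} [Field K] [NeZero (4 : K)] {ε : K}
    (hε : 4 + ε ≠ 0) :
    2 * (1 - (4 - ε) / 4 * (4 / (4 + ε))) = 4 / (4 + ε) * ε := by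
  rw [div_mul_div_cancel₀ (NeZero.ne (4 : K))]
  field_simp
  ring

theorem stmt_10_general {K : Type*} [Field K] [LinearOrder K] [IsStrictOrderedRing K]
    {ε P P' W W' : K} (hε : 0 ≤ ε) (hP : P ≤ 1)
    (hW : W ≤ P + 1 - (4 - ε) / 4 * (4 / (4 + ε)))
    (hW' : 4 / (4 + ε) * P' - 4 / (4 + ε) + (4 - ε) / 4 * (4 / (4 + ε)) ≤ W')
    (hPP : P + ε < P') :
    W < W' := by
  have h_den : 0 < 4 + ε := by positivity
  have hy_pos : 0 < 4 / (4 + ε) := by positivity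
  have hy_le_one : 4 / (4 + ε) ≤ 1 := div_le_one_of_le₀ (le_add_of_nonneg_right hε) h_den.le
  have hgap : 2 * (1 - (4 - ε) / 4 * (4 / (4 + ε))) < 4 / (4 + ε) * (P' - P) := by
    rw [two_mul_one_sub_four_sub_div_mul_four_div h_den.ne']
    exact mul_lt_mul_of_pos_left (lt_sub_iff_add_lt'.mpr hPP) hy_pos
  exact hW.trans_lt ((add_one_sub_mul_lt_mul_sub_add_mul hy_le_one hP hgap).trans_le hW')

/-- Arithmetic core of the main reduction theorem (Theorem 4): with
`x = (4-ε)/4` and `y = 4/(4+ε)`, if `W ≤ P + 1 - x·y`,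
`W' ≥ y·P' - y + x·y`, and `P' > P + ε`, then `W' > W`. -/
theorem stmt_10 (ε : ℝ) (hε : 0 < ε) (P P' W W' : ℝ)
    (hP0 : 0 ≤ P) (hP1 : P ≤ 1) (hP'0 : 0 ≤ P') (hP'1 : P' ≤ 1)
    (hW : W ≤ P + 1 - (4 - ε) / 4 * (4 / (4 + ε)))
    (hW' : W' ≥ 4 / (4 + ε) * P' - 4 / (4 + ε) + (4 - ε) / 4 * (4 / (4 + ε)))
    (hPP : P' > P + ε) :
    W' > W :=
  stmt_10_general hε.le hP1 hW hW' hPP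
end

section
/- Let n, M be natural numbers with M ≥ 1, and let s, s′ be natural numbers with 1 ≤ s < n and 1 ≤ s′ < n. Let Q be an s×s matrix over ℚ with det Q ≠ 0 and b ∈ ℚ^s, and let Q′ be an s′×s′ matrix over ℚ with det Q′ ≠ 0 and b′ ∈ ℚ^{s′}, such that every entry q of Q, of b, of Q′ and of b′ can be written as q = c/d for some integers c, d with |c| ≤ d and 1 ≤ d ≤ M. Let x = Q⁻¹·b and x′ = Q′⁻¹·b′. Then for all indices i and i′: if x_i ≠ x′_{i′}, then |x_i − x′_{i′}| > 1/((n!)²·M^{2n²}). -/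
/-!
Multiply each equation of `Q x = b` by the product of the denominators occurring in it. By Cramer's
rule for the resulting integer system, the reduced denominator of every `x i` divides
`(∏ r, d r) * det Q`, where `d r ≤ M ^ (s + 1)` is the multiplier of row `r`, and `|det Q| ≤ s!` as
the entries of `Q` are at most `1` in absolute value. Two distinct rationals `x`, `y` differ by at
least `1 / (x.den * y.den)`. The bound is strict and of the stated form because `s < n` gives
`s! < n!` and `s * (s + 1) ≤ n ^ 2`.
-/

open Matrix

section Rat

theorem den_dvd_iff_exists_intCast_eq_mul {q : ℚ} {m : ℤ} :
    (q.den : ℤ) ∣ m ↔ ∃ a : ℤ, (a : ℚ) = m * q := by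
  constructor
  · rintro ⟨k, rfl⟩
    refine ⟨k * q.num, ?_⟩
    push_cast
    rw [← Rat.den_mul_eq_num q]
    ring
  · rintro ⟨a, ha⟩
    rcases eq_or_ne m 0 with rfl | hm
    · exact dvd_zero _
    · have hq : q = Rat.divInt a m := by
        rw [Rat.divInt_eq_div, ha, mul_div_cancel_left₀ q (Int.cast_ne_zero.mpr hm)]
      exact hq ▸ Rat.den_dvd a m

theorem inv_den_le_abs {q : ℚ} (hq : q ≠ 0) : (q.den : ℚ)⁻¹ ≤ |q| := by
  have hden : (0 : ℚ) < q.den := by exact_mod_cast q.den_pos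
  rw [inv_le_iff_one_le_mul₀ hden, ← abs_of_pos hden, ← abs_mul, Rat.mul_den_eq_num]
  exact_mod_cast Int.one_le_abs (Rat.num_ne_zero.mpr hq)

theorem inv_den_mul_den_le_abs_sub {x y : ℚ} (hxy : x ≠ y) :
    ((x.den : ℚ) * y.den)⁻¹ ≤ |x - y| := by
  have hden : (x - y).den ≤ x.den * y.den :=
    Nat.le_of_dvd (mul_pos x.den_pos y.den_pos) (Rat.sub_den_dvd x y)
  calc ((x.den : ℚ) * y.den)⁻¹ ≤ ((x - y).den : ℚ)⁻¹ :=
        inv_anti₀ (by exact_mod_cast (x - y).den_pos) (by exact_mod_cast hden)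
    _ ≤ |x - y| := inv_den_le_abs (sub_ne_zero.mpr hxy)

theorem abs_le_one_and_den_le_of_eq_div {M : ℕ} {q : ℚ}
    (hq : ∃ c d : ℤ, |c| ≤ d ∧ 1 ≤ d ∧ d ≤ (M : ℤ) ∧ q = (c : ℚ) / (d : ℚ)) :
    |q| ≤ 1 ∧ q.den ≤ M := by
  obtain ⟨c, d, hcd, hd, hdM, rfl⟩ := hq
  constructor
  · rw [abs_div]
    exact div_le_one_of_le₀ (by exact_mod_cast hcd.trans (le_abs_self d)) (abs_nonneg _)
  · have hden : (((c : ℚ) / d).den : ℤ) ≤ d :=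
      Int.le_of_dvd (by lia) (Rat.divInt_eq_div c d ▸ Rat.den_dvd c d)
    exact_mod_cast hden.trans hdM

end Rat

section LinearSystem

variable {ι : Type*} [Fintype ι] [DecidableEq ι]

theorem den_dvd_det_of_mulVec_eq_intCast {A : Matrix ι ι ℤ} {B : ι → ℤ} {x : ι → ℚ}
    (hx : A.map (Int.castRingHom ℚ) *ᵥ x = Int.castRingHom ℚ ∘ B) (i : ι) :
    ((x i).den : ℤ) ∣ A.det := by
  have hcramer : (A.map (Int.castRingHom ℚ)).det • x = Int.castRingHom ℚ ∘ (A.adjugate *ᵥ B) := by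
    calc (A.map (Int.castRingHom ℚ)).det • x
        = (A.map (Int.castRingHom ℚ)).adjugate *ᵥ (Int.castRingHom ℚ ∘ B) := by
          rw [← hx, mulVec_mulVec, adjugate_mul, smul_mulVec, one_mulVec]
      _ = Int.castRingHom ℚ ∘ (A.adjugate *ᵥ B) := by
          ext j
          rw [Function.comp_apply, RingHom.map_mulVec, ← RingHom.mapMatrix_apply,
            ← RingHom.map_adjugate, RingHom.mapMatrix_apply]
  refine den_dvd_iff_exists_intCast_eq_mul.mpr ⟨(A.adjugate *ᵥ B) i, ?_⟩
  rw [← RingHom.mapMatrix_apply, ← RingHom.map_det] at hcramer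
  exact (congrFun hcramer i).symm

theorem den_le_prod_mul_abs_det {Q : Matrix ι ι ℚ} {b x : ι → ℚ} (hx : Q *ᵥ x = b)
    (hQ : Q.det ≠ 0) {d : ι → ℕ} (hd : ∀ r, d r ≠ 0) (hQd : ∀ r j, (Q r j).den ∣ d r)
    (hbd : ∀ r, (b r).den ∣ d r) (i : ι) :
    ((x i).den : ℚ) ≤ (∏ r, (d r : ℚ)) * |Q.det| := by
  choose A hA using fun r j ↦
    den_dvd_iff_exists_intCast_eq_mul.mp (Int.natCast_dvd_natCast.mpr (hQd r j))
  choose B hB using fun r ↦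
    den_dvd_iff_exists_intCast_eq_mul.mp (Int.natCast_dvd_natCast.mpr (hbd r))
  have hmap : (of A).map (Int.castRingHom ℚ) = diagonal (fun r ↦ (d r : ℚ)) * Q := by
    ext r j
    simp [diagonal_mul, hA]
  have hAx : (of A).map (Int.castRingHom ℚ) *ᵥ x = Int.castRingHom ℚ ∘ B := by
    rw [hmap, ← mulVec_mulVec, hx]
    ext r
    simp [mulVec_diagonal, hB]
  have hdet : ((of A).det : ℚ) = (∏ r, (d r : ℚ)) * Q.det := by
    rw [← det_diagonal, ← det_mul, ← hmap, ← RingHom.mapMatrix_apply, ← RingHom.map_det,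
      eq_intCast]
  have hdet_ne : (of A).det ≠ 0 := by
    rw [← Int.cast_ne_zero (α := ℚ), hdet]
    exact mul_ne_zero (Finset.prod_ne_zero_iff.mpr fun r _ ↦ Nat.cast_ne_zero.mpr (hd r)) hQ
  have hden : ((x i).den : ℤ) ≤ |(of A).det| :=
    Int.le_of_dvd (abs_pos.mpr hdet_ne) ((dvd_abs _ _).mpr (den_dvd_det_of_mulVec_eq_intCast hAx i))
  calc ((x i).den : ℚ) ≤ |((of A).det : ℚ)| := by exact_mod_cast hden
    _ = (∏ r, (d r : ℚ)) * |Q.det| := by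
      rw [hdet, abs_mul, abs_of_nonneg (Finset.prod_nonneg fun r _ ↦ Nat.cast_nonneg (d r))]

theorem abs_det_le_factorial {R : Type*} [CommRing R] [LinearOrder R] [IsStrictOrderedRing R]
    {Q : Matrix ι ι R} (hQ : ∀ i j, |Q i j| ≤ 1) : |Q.det| ≤ (Fintype.card ι).factorial := by
  simpa using det_le (abv := AbsoluteValue.abs) hQ

theorem den_inv_mulVec_le {M : ℕ} {Q : Matrix ι ι ℚ} {b : ι → ℚ} (hQ : Q.det ≠ 0)
    (hQ_abs : ∀ r j, |Q r j| ≤ 1) (hQ_den : ∀ r j, (Q r j).den ≤ M)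
    (hb_den : ∀ r, (b r).den ≤ M) (i : ι) :
    ((Q⁻¹ *ᵥ b) i).den ≤
      (Fintype.card ι).factorial * M ^ (Fintype.card ι * (Fintype.card ι + 1)) := by
  let d (r : ι) : ℕ := (∏ j, (Q r j).den) * (b r).den
  have hd (r : ι) : d r ≠ 0 :=
    mul_ne_zero (Finset.prod_ne_zero_iff.mpr fun j _ ↦ (Q r j).den_ne_zero) (b r).den_ne_zero
  have hQd (r j : ι) : (Q r j).den ∣ d r :=
    (Finset.dvd_prod_of_mem _ (Finset.mem_univ j)).mul_right _
  have hbd (r : ι) : (b r).den ∣ d r := dvd_mul_left _ _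
  have hdM (r : ι) : d r ≤ M ^ (Fintype.card ι + 1) := by
    rw [pow_succ]
    exact Nat.mul_le_mul (Finset.prod_le_pow_card _ _ _ fun j _ ↦ hQ_den r j) (hb_den r)
  have hprod : ∏ r, d r ≤ M ^ (Fintype.card ι * (Fintype.card ι + 1)) := by
    rw [mul_comm, pow_mul]
    exact Finset.prod_le_pow_card _ _ _ fun r _ ↦ hdM r
  have hx : Q *ᵥ (Q⁻¹ *ᵥ b) = b := by
    rw [mulVec_mulVec, mul_nonsing_inv _ hQ.isUnit, one_mulVec]
  rw [← Nat.cast_le (α := ℚ), mul_comm]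
  push_cast
  calc (((Q⁻¹ *ᵥ b) i).den : ℚ) ≤ (∏ r, (d r : ℚ)) * |Q.det| :=
        den_le_prod_mul_abs_det hx hQ hd hQd hbd i
    _ ≤ (M : ℚ) ^ (Fintype.card ι * (Fintype.card ι + 1)) * (Fintype.card ι).factorial :=
        mul_le_mul (by exact_mod_cast hprod) (abs_det_le_factorial hQ_abs) (abs_nonneg _)
          (by positivity)

theorem den_inv_mulVec_lt {n M : ℕ} (hι : Fintype.card ι < n) {Q : Matrix ι ι ℚ} {b : ι → ℚ}
    (hQ : Q.det ≠ 0) (hQ_abs : ∀ r j, |Q r j| ≤ 1) (hQ_den : ∀ r j, (Q r j).den ≤ M)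
    (hb_den : ∀ r, (b r).den ≤ M) (i : ι) :
    ((Q⁻¹ *ᵥ b) i).den < n.factorial * M ^ n ^ 2 := by
  have hM : 0 < M := (b i).den_pos.trans_le (hb_den i)
  have hcard : 0 < Fintype.card ι := Fintype.card_pos_iff.mpr ⟨i⟩
  calc ((Q⁻¹ *ᵥ b) i).den
      ≤ (Fintype.card ι).factorial * M ^ (Fintype.card ι * (Fintype.card ι + 1)) :=
        den_inv_mulVec_le hQ hQ_abs hQ_den hb_den i
    _ ≤ (Fintype.card ι).factorial * M ^ n ^ 2 :=
        Nat.mul_le_mul_left _ (Nat.pow_le_pow_right hM (by nlinarith))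
    _ < n.factorial * M ^ n ^ 2 :=
        Nat.mul_lt_mul_of_pos_right ((Nat.factorial_lt hcard).mpr hι) (Nat.pow_pos hM)

end LinearSystem

theorem stmt_13_general {ι κ : Type*} [Fintype ι] [DecidableEq ι] [Fintype κ] [DecidableEq κ]
    {n M : ℕ} (hι : Fintype.card ι < n) (hκ : Fintype.card κ < n)
    {Q : Matrix ι ι ℚ} (hQ : Q.det ≠ 0) {b : ι → ℚ}
    {Q' : Matrix κ κ ℚ} (hQ' : Q'.det ≠ 0) {b' : κ → ℚ}
    (hQe : ∀ i j, |Q i j| ≤ 1 ∧ (Q i j).den ≤ M) (hbe : ∀ i, (b i).den ≤ M)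
    (hQ'e : ∀ i j, |Q' i j| ≤ 1 ∧ (Q' i j).den ≤ M) (hb'e : ∀ i, (b' i).den ≤ M)
    (i : ι) (k : κ) (hne : (Q⁻¹ *ᵥ b) i ≠ (Q'⁻¹ *ᵥ b') k) :
    1 / ((n.factorial : ℚ) ^ 2 * (M : ℚ) ^ (2 * n ^ 2)) < |(Q⁻¹ *ᵥ b) i - (Q'⁻¹ *ᵥ b') k| := by
  set x := (Q⁻¹ *ᵥ b) i
  set y := (Q'⁻¹ *ᵥ b') k
  have hx : x.den < n.factorial * M ^ n ^ 2 :=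
    den_inv_mulVec_lt hι hQ (fun r j ↦ (hQe r j).1) (fun r j ↦ (hQe r j).2) hbe i
  have hy : y.den < n.factorial * M ^ n ^ 2 :=
    den_inv_mulVec_lt hκ hQ' (fun r j ↦ (hQ'e r j).1) (fun r j ↦ (hQ'e r j).2) hb'e k
  have hxy : x.den * y.den < n.factorial ^ 2 * M ^ (2 * n ^ 2) :=
    calc x.den * y.den < (n.factorial * M ^ n ^ 2) * (n.factorial * M ^ n ^ 2) :=
          Nat.mul_lt_mul'' hx hy
      _ = n.factorial ^ 2 * M ^ (2 * n ^ 2) := by ring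
  calc 1 / ((n.factorial : ℚ) ^ 2 * (M : ℚ) ^ (2 * n ^ 2)) < ((x.den : ℚ) * y.den)⁻¹ := by
        rw [one_div]
        exact inv_strictAnti₀ (by exact_mod_cast mul_pos x.den_pos y.den_pos)
          (by exact_mod_cast hxy)
    _ ≤ |x - y| := inv_den_mul_den_le_abs_sub hne

/-- Lemma 4.1 ('lower bound on different strategies') in linear-algebra form:
solutions of two nonsingular rational linear systems, all of whose entries are
fractions `c/d` with `|c| ≤ d` and `1 ≤ d ≤ M`, in `s < n` resp. `s' < n`
unknowns, either coincide componentwise or differ by more than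
`1/((n!)²·M^(2n²))`. -/
theorem stmt_13 (n M : ℕ) (hM : 1 ≤ M) (s s' : ℕ)
    (hs : 1 ≤ s) (hsn : s < n) (hs' : 1 ≤ s') (hs'n : s' < n)
    (Q : Matrix (Fin s) (Fin s) ℚ) (hQ : Q.det ≠ 0) (b : Fin s → ℚ)
    (Q' : Matrix (Fin s') (Fin s') ℚ) (hQ' : Q'.det ≠ 0) (b' : Fin s' → ℚ)
    (hQe : ∀ i j, ∃ c d : ℤ, |c| ≤ d ∧ 1 ≤ d ∧ d ≤ (M : ℤ) ∧
      Q i j = (c : ℚ) / (d : ℚ))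
    (hbe : ∀ i, ∃ c d : ℤ, |c| ≤ d ∧ 1 ≤ d ∧ d ≤ (M : ℤ) ∧
      b i = (c : ℚ) / (d : ℚ))
    (hQ'e : ∀ i j, ∃ c d : ℤ, |c| ≤ d ∧ 1 ≤ d ∧ d ≤ (M : ℤ) ∧
      Q' i j = (c : ℚ) / (d : ℚ))
    (hb'e : ∀ i, ∃ c d : ℤ, |c| ≤ d ∧ 1 ≤ d ∧ d ≤ (M : ℤ) ∧
      b' i = (c : ℚ) / (d : ℚ)) :
    ∀ (i : Fin s) (i' : Fin s'),
      Q⁻¹.mulVec b i ≠ Q'⁻¹.mulVec b' i' →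
      |Q⁻¹.mulVec b i - Q'⁻¹.mulVec b' i'| >
        1 / ((n.factorial : ℚ) ^ 2 * (M : ℚ) ^ (2 * n ^ 2)) := fun i i' ↦
  stmt_13_general (by simpa using hsn) (by simpa using hs'n) hQ hQ'
    (fun r j ↦ abs_le_one_and_den_le_of_eq_div (hQe r j))
    (fun r ↦ (abs_le_one_and_den_le_of_eq_div (hbe r)).2)
    (fun r j ↦ abs_le_one_and_den_le_of_eq_div (hQ'e r j))
    (fun r ↦ (abs_le_one_and_den_le_of_eq_div (hb'e r)).2) i i'
end
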